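/- arXiv:1807.09000 — 2 statements merged into one kernel-verified Lean document; each statement's English description precedes it below -/
import Mathlib

section
/- Strict per-hidden-object lemma. Let u₀ and u₁ be utterances, o^t ∈ C a target with ℒ u₀ o^t = 1 and ℒ u₁ o^t = 1, and let o* be an object with o* ∉ C, ℒ u₁ o* = 1, and ℒ u₀ o* = 0. Then L₀(o^t | u₀, C ∪ {o*}) / L₀(o^t | u₁, C ∪ {o*}) > L₀(o^t | u₀, C) / L₀(o^t | u₁, C); that is, adding to the context a hidden object that matches only the less specific utterance strictly increases the literal listener's relative preference for the target under the more specific utterance. -/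
/-!
Enlarging the context from `C` to `C ∪ {o*}` multiplies the probability of every other object by
`1 - L₀(o* | u, C ∪ {o*})`, the mass not taken by the hidden object. Hence the ratio between `u₀`
and `u₁` at the target increases exactly when `o*` takes less mass under `u₀` than under `u₁`. An
object that only `u₁` matches takes none under `u₀` and a positive amount under `u₁`.
-/

open Finset Real

noncomputable section

/-- Literal listener: `L0 ℒ C u o = ℒ u o / ∑ o' ∈ C, ℒ u o'`. -/
def L0 {O 𝒰 : Type*} (ℒ : 𝒰 → O → ℝ) (C : Finset O) (u : 𝒰) (o : O) : ℝ :=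
  ℒ u o / ∑ o' ∈ C, ℒ u o'

section LiteralListener

variable {O 𝒰 : Type*} {ℒ : 𝒰 → O → ℝ} {C : Finset O} {u : 𝒰} {o : O}

theorem L0_pos (hL : ∀ o' ∈ C, 0 ≤ ℒ u o') (hoC : o ∈ C) (ho : 0 < ℒ u o) :
    0 < L0 ℒ C u o :=
  div_pos ho (sum_pos' hL ⟨o, hoC, ho⟩)

variable [DecidableEq O] {os : O}

theorem L0_insert (hos : os ∉ C) (hC : ∑ o' ∈ C, ℒ u o' ≠ 0)
    (hC' : ∑ o' ∈ insert os C, ℒ u o' ≠ 0) (o : O) :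
    L0 ℒ (insert os C) u o = L0 ℒ C u o * (1 - L0 ℒ (insert os C) u os) := by
  have remaining_mass :
      1 - L0 ℒ (insert os C) u os = (∑ o' ∈ C, ℒ u o') / ∑ o' ∈ insert os C, ℒ u o' := by
    rw [L0, one_sub_div hC', sum_insert hos, add_sub_cancel_left]
  rw [remaining_mass, L0, L0, div_mul_div_cancel₀ hC]

theorem L0_insert_of_nonneg (hL : ∀ o', 0 ≤ ℒ u o') (hos : os ∉ C) (hoC : o ∈ C)
    (ho : 0 < ℒ u o) :
    L0 ℒ (insert os C) u o = L0 ℒ C u o * (1 - L0 ℒ (insert os C) u os) :=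
  L0_insert hos (sum_pos' (fun o' _ ↦ hL o') ⟨o, hoC, ho⟩).ne'
    (sum_pos' (fun o' _ ↦ hL o') ⟨o, mem_insert_of_mem hoC, ho⟩).ne' o

theorem L0_insert_self_lt_one (hL : ∀ o', 0 ≤ ℒ u o') (hos : os ∉ C) (hoC : o ∈ C)
    (ho : 0 < ℒ u o) : L0 ℒ (insert os C) u os < 1 := by
  have hpos : 0 < L0 ℒ C u o * (1 - L0 ℒ (insert os C) u os) := by
    rw [← L0_insert_of_nonneg hL hos hoC ho]
    exact L0_pos (fun o' _ ↦ hL o') (mem_insert_of_mem hoC) ho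
  exact sub_pos.mp (pos_of_mul_pos_right hpos (L0_pos (fun o' _ ↦ hL o') hoC ho).le)

theorem listener_ratio_strict_increase_general (hL : ∀ u o, 0 ≤ ℒ u o) {u₀ u₁ : 𝒰} {oT : O}
    (hoT : oT ∈ C) (h0 : 0 < ℒ u₀ oT) (h1 : 0 < ℒ u₁ oT) (hos : os ∉ C) :
    L0 ℒ (insert os C) u₀ oT / L0 ℒ (insert os C) u₁ oT > L0 ℒ C u₀ oT / L0 ℒ C u₁ oT ↔
      L0 ℒ (insert os C) u₀ os < L0 ℒ (insert os C) u₁ os := by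
  have ratio_pos : 0 < L0 ℒ C u₀ oT / L0 ℒ C u₁ oT :=
    div_pos (L0_pos (fun o _ ↦ hL u₀ o) hoT h0) (L0_pos (fun o _ ↦ hL u₁ o) hoT h1)
  have remaining_pos : 0 < 1 - L0 ℒ (insert os C) u₁ os :=
    sub_pos.mpr (L0_insert_self_lt_one (hL u₁) hos hoT h1)
  rw [L0_insert_of_nonneg (hL u₀) hos hoT h0, L0_insert_of_nonneg (hL u₁) hos hoT h1,
    mul_div_mul_comm, gt_iff_lt, lt_mul_iff_one_lt_right ratio_pos, one_lt_div remaining_pos,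
    sub_lt_sub_iff_left]

end LiteralListener

/-- Strict per-hidden-object lemma. -/
theorem listener_ratio_strict_increase
    {O 𝒰 : Type*} [DecidableEq O]
    (ℒ : 𝒰 → O → ℝ) (hL : ∀ u o, ℒ u o = 0 ∨ ℒ u o = 1)
    (u₀ u₁ : 𝒰) (C : Finset O) (oT : O) (hoT : oT ∈ C)
    (h0 : ℒ u₀ oT = 1) (h1 : ℒ u₁ oT = 1)
    (os : O) (hos : os ∉ C) (hos1 : ℒ u₁ os = 1) (hos0 : ℒ u₀ os = 0) :
    L0 ℒ (insert os C) u₀ oT / L0 ℒ (insert os C) u₁ oT >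
      L0 ℒ C u₀ oT / L0 ℒ C u₁ oT := by
  have nonneg (u : 𝒰) (o : O) : 0 ≤ ℒ u o := by
    rcases hL u o with h | h <;> simp [h]
  have hidden_mass_eq_zero : L0 ℒ (insert os C) u₀ os = 0 := by
    rw [L0, hos0, zero_div]
  rw [listener_ratio_strict_increase_general nonneg hoT (by simp [h0]) (by simp [h1]) hos,
    hidden_mass_eq_zero]
  exact L0_pos (fun o _ ↦ nonneg u₁ o) (mem_insert_self os C) (by simp [hos1])

end
end

section
/- Mixture corollary. Let u₀ be more specific than u₁ (E_{u₀} ⊊ E_{u₁}), let o^t ∈ C be the target with ℒ u₀ o^t = 1 and ℒ u₁ o^t = 1, let P be a hidden-object prior such that every object o with P(o) > 0 satisfies o ∈ C or ℒ u₀ o = 0, and suppose there exists an object o* ∉ C with ℒ u₁ o* = 1, ℒ u₀ o* = 0, and P(o*) > 0. Then for every mixture weight w with 0 < w ≤ 1, the mixture utility U_mix(u) = w·U_asym(u) + (1 − w)·U_ego(u) satisfies U_mix(u₀) − U_mix(u₁) > U_ego(u₀) − U_ego(u₁); that is, any speaker placing positive weight on the asymmetric utility prefers the more specific utterance strictly more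 than a purely egocentric speaker. -/
open Finset Real

noncomputable section

/-- Egocentric utility. -/
def Uego {O 𝒰 : Type*} (ℒ : 𝒰 → O → ℝ) (C : Finset O) (oT : O) (cost : 𝒰 → ℝ) (u : 𝒰) : ℝ :=
  Real.log (L0 ℒ C u oT) - cost u

/-- Asymmetric (occlusion-sensitive) utility. -/
def Uasym {O 𝒰 : Type*} [DecidableEq O] [Fintype O] (ℒ : 𝒰 → O → ℝ) (C : Finset O) (oT : O)
    (P : O → ℝ) (cost : 𝒰 → ℝ) (u : 𝒰) : ℝ :=
  (∑ oh : O, P oh * Real.log (L0 ℒ (insert oh C) u oT)) - cost u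

/-
Learning that a hidden object `h ∉ C` is present divides every listener probability by
`1 + L0 ℒ C u h`, so `Uasym` is `Uego` minus the expected value of `log (1 + L0 ℒ C u h)`.
Mixing in `Uasym` with weight `w` therefore changes the preference for `u₀` over `u₁` by `w` times
the difference of these losses, and the loss of an utterance grows with the weight the listener
would give to the hidden objects.
-/

section

variable {O 𝒰 : Type*} {ℒ : 𝒰 → O → ℝ} {C : Finset O} {P : O → ℝ} {u u₀ u₁ : 𝒰} {o oT oh : O}

theorem L0_nonneg (hu : ∀ o, 0 ≤ ℒ u o) (o : O) : 0 ≤ L0 ℒ C u o :=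
  div_nonneg (hu o) (Finset.sum_nonneg fun o' _ => hu o')

theorem L0_pos_s7 (hu : ∀ o, 0 ≤ ℒ u o) (hoT : oT ∈ C) (huT : 0 < ℒ u oT) (ho : 0 < ℒ u o) :
    0 < L0 ℒ C u o :=
  div_pos ho (Finset.sum_pos' (fun o' _ => hu o') ⟨oT, hoT, huT⟩)

theorem L0_eq_zero (ho : ℒ u o = 0) : L0 ℒ C u o = 0 := by
  rw [L0, ho, zero_div]

theorem L0_insert_s7 [DecidableEq O] (hC : ∑ o' ∈ C, ℒ u o' ≠ 0) (hoh : oh ∉ C) (o : O) :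
    L0 ℒ (insert oh C) u o = L0 ℒ C u o / (1 + L0 ℒ C u oh) := by
  rw [L0, L0, L0, Finset.sum_insert hoh, one_add_div hC, div_div_div_cancel_right₀ hC, add_comm]

theorem log_L0_insert [DecidableEq O] (hu : ∀ o, 0 ≤ ℒ u o) (hoT : oT ∈ C) (huT : 0 < ℒ u oT)
    (hoh : oh ∉ C) :
    Real.log (L0 ℒ (insert oh C) u oT) =
      Real.log (L0 ℒ C u oT) - Real.log (1 + L0 ℒ C u oh) := by
  have hC : 0 < ∑ o' ∈ C, ℒ u o' := Finset.sum_pos' (fun o' _ => hu o') ⟨oT, hoT, huT⟩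
  have hh : 0 ≤ L0 ℒ C u oh := L0_nonneg hu oh
  rw [L0_insert_s7 hC.ne' hoh, Real.log_div (L0_pos_s7 hu hoT huT huT).ne' (by positivity)]

variable [DecidableEq O] [Fintype O]

/-- The expected loss in log-probability of the target caused by a hidden object drawn from `P`.
Only objects outside `C` contribute, since inserting an object of `C` leaves the context
unchanged. For `oh ∉ C`, the value `L0 ℒ C u oh` is not a probability but the ratio of `ℒ u oh` to
the total weight of `C`. -/
def occlusionLoss (ℒ : 𝒰 → O → ℝ) (C : Finset O) (P : O → ℝ) (u : 𝒰) : ℝ :=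
  ∑ oh ∈ Cᶜ, P oh * Real.log (1 + L0 ℒ C u oh)

theorem Uasym_eq_Uego_sub_occlusionLoss (hu : ∀ o, 0 ≤ ℒ u o) (hoT : oT ∈ C) (huT : 0 < ℒ u oT)
    (hPsum : ∑ o, P o = 1) (cost : 𝒰 → ℝ) :
    Uasym ℒ C oT P cost u = Uego ℒ C oT cost u - occlusionLoss ℒ C P u := by
  have inside : ∑ oh ∈ C, P oh * Real.log (L0 ℒ (insert oh C) u oT) =
      ∑ oh ∈ C, P oh * Real.log (L0 ℒ C u oT) :=
    Finset.sum_congr rfl fun oh hoh => by rw [Finset.insert_eq_of_mem hoh]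
  have outside : ∑ oh ∈ Cᶜ, P oh * Real.log (L0 ℒ (insert oh C) u oT) =
      ∑ oh ∈ Cᶜ, P oh * Real.log (L0 ℒ C u oT) - occlusionLoss ℒ C P u := by
    rw [occlusionLoss, ← Finset.sum_sub_distrib]
    refine Finset.sum_congr rfl fun oh hoh => ?_
    rw [log_L0_insert hu hoT huT (Finset.mem_compl.mp hoh), mul_sub]
  have expected : ∑ oh, P oh * Real.log (L0 ℒ (insert oh C) u oT) =
      Real.log (L0 ℒ C u oT) - occlusionLoss ℒ C P u := by
    rw [← Finset.sum_add_sum_compl C, inside, outside, ← add_sub_assoc,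
      Finset.sum_add_sum_compl, ← Finset.sum_mul, hPsum, one_mul]
  rw [Uasym, Uego, expected, sub_right_comm]

theorem occlusionLoss_lt_occlusionLoss (hu₀ : ∀ o, 0 ≤ ℒ u₀ o) (hP : ∀ o, 0 ≤ P o)
    (hle : ∀ o ∉ C, 0 < P o → L0 ℒ C u₀ o ≤ L0 ℒ C u₁ o)
    (hlt : ∃ o ∉ C, 0 < P o ∧ L0 ℒ C u₀ o < L0 ℒ C u₁ o) :
    occlusionLoss ℒ C P u₀ < occlusionLoss ℒ C P u₁ := by
  have one_add_L0_pos (o : O) : 0 < 1 + L0 ℒ C u₀ o :=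
    add_pos_of_pos_of_nonneg one_pos (L0_nonneg hu₀ o)
  obtain ⟨os, hosC, hPos, hos⟩ := hlt
  refine Finset.sum_lt_sum (fun oh hoh => ?_) ⟨os, Finset.mem_compl.mpr hosC, ?_⟩
  · rcases (hP oh).eq_or_lt with hPoh | hPoh
    · rw [← hPoh, zero_mul, zero_mul]
    · gcongr
      · exact one_add_L0_pos oh
      · exact hle oh (Finset.mem_compl.mp hoh) hPoh
  · gcongr
    exact one_add_L0_pos os

end

theorem mixture_prefers_specific_general
    {O 𝒰 : Type*} [DecidableEq O] [Fintype O]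
    (ℒ : 𝒰 → O → ℝ) (hL : ∀ u o, 0 ≤ ℒ u o) (u₀ u₁ : 𝒰)
    (C : Finset O) (oT : O) (hoT : oT ∈ C) (h0 : 0 < ℒ u₀ oT) (h1 : 0 < ℒ u₁ oT)
    (P : O → ℝ) (hP : ∀ o, 0 ≤ P o) (hPsum : ∑ o : O, P o = 1)
    (hle : ∀ o ∉ C, 0 < P o → L0 ℒ C u₀ o ≤ L0 ℒ C u₁ o)
    (hlt : ∃ o ∉ C, 0 < P o ∧ L0 ℒ C u₀ o < L0 ℒ C u₁ o)
    (cost : 𝒰 → ℝ) (w : ℝ) (hw : 0 < w) :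
    (w * Uasym ℒ C oT P cost u₀ + (1 - w) * Uego ℒ C oT cost u₀) -
        (w * Uasym ℒ C oT P cost u₁ + (1 - w) * Uego ℒ C oT cost u₁) >
      Uego ℒ C oT cost u₀ - Uego ℒ C oT cost u₁ := by
  have loss_lt : w * occlusionLoss ℒ C P u₀ < w * occlusionLoss ℒ C P u₁ :=
    mul_lt_mul_of_pos_left (occlusionLoss_lt_occlusionLoss (hL u₀) hP hle hlt) hw
  rw [Uasym_eq_Uego_sub_occlusionLoss (hL u₀) hoT h0 hPsum,
    Uasym_eq_Uego_sub_occlusionLoss (hL u₁) hoT h1 hPsum]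
  linarith

/-- Mixture corollary: any positive weight on the asymmetric utility strictly
increases the preference for the more specific utterance. -/
theorem mixture_prefers_specific
    {O 𝒰 : Type*} [DecidableEq O] [Fintype O]
    (ℒ : 𝒰 → O → ℝ) (hL : ∀ u o, ℒ u o = 0 ∨ ℒ u o = 1)
    (u₀ u₁ : 𝒰) (hspec : {o : O | ℒ u₀ o = 1} ⊂ {o : O | ℒ u₁ o = 1})
    (C : Finset O) (oT : O) (hoT : oT ∈ C)
    (h0 : ℒ u₀ oT = 1) (h1 : ℒ u₁ oT = 1)
    (P : O → ℝ) (hP : ∀ o, 0 ≤ P o) (hPsum : ∑ o : O, P o = 1)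
    (hPsupp : ∀ o, 0 < P o → o ∈ C ∨ ℒ u₀ o = 0)
    (hstar : ∃ os, os ∉ C ∧ ℒ u₁ os = 1 ∧ ℒ u₀ os = 0 ∧ 0 < P os)
    (cost : 𝒰 → ℝ) (w : ℝ) (hw0 : 0 < w) (hw1 : w ≤ 1) :
    (w * Uasym ℒ C oT P cost u₀ + (1 - w) * Uego ℒ C oT cost u₀) -
        (w * Uasym ℒ C oT P cost u₁ + (1 - w) * Uego ℒ C oT cost u₁) >
      Uego ℒ C oT cost u₀ - Uego ℒ C oT cost u₁ := by
  have hL_nonneg (u : 𝒰) (o : O) : 0 ≤ ℒ u o := by rcases hL u o with h | h <;> simp [h]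
  have h0T : 0 < ℒ u₀ oT := h0 ▸ one_pos
  have h1T : 0 < ℒ u₁ oT := h1 ▸ one_pos
  obtain ⟨os, hosC, h1os, h0os, hPos⟩ := hstar
  exact mixture_prefers_specific_general ℒ hL_nonneg u₀ u₁ C oT hoT h0T h1T P hP hPsum
    (fun o hoC hPo => (L0_eq_zero ((hPsupp o hPo).resolve_left hoC)).trans_le
      (L0_nonneg (hL_nonneg u₁) o))
    ⟨os, hosC, hPos, (L0_eq_zero h0os).trans_lt
      (L0_pos_s7 (hL_nonneg u₁) hoT h1T (h1os ▸ one_pos))⟩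
    cost w hw0

end
end
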